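/- For every n ≥ 5, the n×n strictly upper triangular matrix C over ℤ/2 with c_{1,2}=1, c_{1,n-2}=1, c_{n-2,n-1}=1, c_{n-2,n}=1 and all other entries 0 has all row sums 0 mod 2, but for j=1 and k=n−2 one has ∑_{r=1}^n c_{1,r}c_{n-2,r} + c_{1,n-2}·∑_{r<s} c_{n-2,r}c_{n-2,s} = 1 in ℤ/2. -/

import Mathlib

open Finset

theorem stmt12 (n : ℕ) (hn : 5 ≤ n)
    (C : Matrix (Fin n) (Fin n) (ZMod 2))
    (hC : C = Matrix.of fun i j : Fin n =>
      if (i.val = 0 ∧ j.val = 1) ∨ (i.val = 0 ∧ j.val = n - 3) ∨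
         (i.val = n - 3 ∧ j.val = n - 2) ∨ (i.val = n - 3 ∧ j.val = n - 1)
      then (1 : ZMod 2) else 0) :
    (∀ i : Fin n, ∑ j : Fin n, C i j = 0) ∧
    (∑ r : Fin n, C ⟨0, by omega⟩ r * C ⟨n - 3, by omega⟩ r) +
      C ⟨0, by omega⟩ ⟨n - 3, by omega⟩ *
        ∑ r : Fin n, ∑ s ∈ univ.filter (fun s => r < s),
          C ⟨n - 3, by omega⟩ r * C ⟨n - 3, by omega⟩ s = 1 := by
  have h2 : (1 : ZMod 2) + 1 = 0 := by decide
  have e0 : ∀ j : Fin n, C ⟨0, by omega⟩ j =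
      (if j = ⟨1, by omega⟩ then 1 else 0) + (if j = ⟨n - 3, by omega⟩ then 1 else 0) := by
    intro j
    simp only [hC, Matrix.of_apply, Fin.ext_iff, true_and]
    split_ifs <;> first | omega | simp
  have e1 : ∀ j : Fin n, C ⟨n - 3, by omega⟩ j =
      (if j = ⟨n - 2, by omega⟩ then 1 else 0) + (if j = ⟨n - 1, by omega⟩ then 1 else 0) := by
    intro j
    simp only [hC, Matrix.of_apply, Fin.ext_iff, true_and]
    split_ifs <;> first | omega | simp
  refine ⟨?_, ?_⟩
  · intro i
    by_cases h0 : i = ⟨0, by omega⟩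
    · subst h0
      simp [e0, Finset.sum_add_distrib, h2]
    by_cases h1 : i = ⟨n - 3, by omega⟩
    · subst h1
      simp [e1, Finset.sum_add_distrib, h2]
    apply Finset.sum_eq_zero
    intro j _
    simp only [Fin.ext_iff] at h0 h1
    simp only [hC, Matrix.of_apply]
    rw [if_neg (by omega)]
  · have z1 : ∑ r : Fin n, C ⟨0, by omega⟩ r * C ⟨n - 3, by omega⟩ r = 0 := by
      apply Finset.sum_eq_zero
      intro r _
      rw [e0, e1]
      simp only [Fin.ext_iff]
      split_ifs <;> first | omega | simp
    have z2 : C ⟨0, by omega⟩ ⟨n - 3, by omega⟩ = 1 := by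
      rw [e0]
      simp only [Fin.ext_iff]
      split_ifs <;> first | omega | simp
    rw [z1, z2, zero_add, one_mul]
    rw [Finset.sum_eq_single (⟨n - 2, by omega⟩ : Fin n)]
    · rw [Finset.sum_eq_single (⟨n - 1, by omega⟩ : Fin n)]
      · rw [e1, e1]
        simp only [Fin.ext_iff]
        split_ifs <;> first | omega | simp
      · intro s hs hne
        simp only [Finset.mem_filter, Fin.lt_def, Finset.mem_univ, true_and] at hs
        have := s.isLt
        exact absurd (Fin.ext (by simp only; omega)) hne
      · intro h
        exact absurd (by simp [Fin.lt_def]; omega) h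
    · intro r _ hr
      apply Finset.sum_eq_zero
      intro s hs
      simp only [Finset.mem_filter, Fin.lt_def, Finset.mem_univ, true_and] at hs
      have := s.isLt
      simp only [ne_eq, Fin.ext_iff] at hr
      rw [e1 r]
      simp only [Fin.ext_iff]
      split_ifs <;> first | omega | simp
    · intro h
      exact absurd (Finset.mem_univ _) h
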